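/- Let p ≥ 5 be a prime and e ≥ 1 an integer, and set l = p^{e−1}·((p² − 1)/2). Let G_{p^e} be the set of functions f : ℤ/p^eℤ → ℤ/p^eℤ such that there exists a positive integer k with gcd(k, l) = 1 and f(u) = D_k(u, 1) for all u ∈ ℤ/p^eℤ. Then the cardinality of G_{p^e} equals φ(l)/4 if e = 1 and equals φ(l)/2 if e > 1, where φ is Euler's totient function; explicitly, |G_p| = φ((p² − 1)/2)/4 and |G_{p^e}| = (p^{e−2}(p−1)/2)·φ((p² − 1)/2) for e > 1. -/

import Mathlib

open Polynomial

/-!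
Over a quadratic extension write `u = x + x⁻¹`. Then `D_k(u, 1) = x ^ k + x ^ (-k)`, so
`D_k(u, 1) - D_m(u, 1) = x ^ (-k) * (x ^ (k - m) - 1) * (x ^ (k + m) - 1)`.

Put `l = p ^ (e - 1) * lcm (p - 1) (p + 1)`. On `ℤ/p^e` the function `D_k` depends only on `k`
modulo `l`: if `u ^ 2 - 4` is a unit then `x ^ l = 1`, and otherwise `p ∣ (x ^ 2 - 1) ^ 2` and the
product of the two factors vanishes for `m = k + l`. Since `D_k ∘ D_m = D_{km}`, the Dickson
functions with index prime to `l` form the image of a homomorphism on `(ℤ/l)ˣ`, and it remains to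
find its kernel. Testing `D_k(u) = u` at a generator `x` of `(ℤ/p^e)ˣ` and at an element `x` of
order `p + 1` in `𝔽_{p²}` gives `k ≡ ±1` modulo `p ^ (e - 1) * (p - 1)` and modulo `p + 1`. For
`e = 1` both signs are free and the kernel is `{±1, ±p}`, as `D_p(u) = u ^ p = u` on `𝔽_p`. For
`e > 1` the signs must agree, because `D_k` can only be the identity modulo `p ^ 2` if its
derivative is `1` modulo `p`, and the kernel is `{±1}`.
-/

section ChebyshevEvaluation

variable {R : Type*} [CommRing R] (x : Rˣ) (k m : ℤ)

lemma eval_chebyshevC_add_inv :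
    (Chebyshev.C R k).eval (x + ↑x⁻¹ : R) = ↑(x ^ k) + ↑(x ^ (-k)) := by
  have eval_natCast (n : ℕ) :
      (Chebyshev.C R n).eval (x + ↑x⁻¹ : R) = ↑(x ^ (n : ℤ)) + ↑(x ^ (-n : ℤ)) := by
    rw [← dickson_one_one_eq_chebyshev_C, dickson_one_one_eval_add_inv _ _ x.mul_inv]
    simp [← inv_pow]
  obtain ⟨n, rfl | rfl⟩ := k.eq_nat_or_neg
  · exact eval_natCast n
  · rw [Chebyshev.C_neg, eval_natCast, neg_neg, add_comm]

lemma eval_chebyshevC_add_inv_sub :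
    (Chebyshev.C R k).eval (x + ↑x⁻¹ : R) - (Chebyshev.C R m).eval (x + ↑x⁻¹ : R) =
      ↑(x ^ (-k)) * ((↑(x ^ (k - m)) - 1) * (↑(x ^ (k + m)) - 1)) := by
  have hk : ((x ^ (-k) : Rˣ) : R) * ↑(x ^ k) = 1 := by simp [← Units.val_mul]
  have hm : ((x ^ (-m) : Rˣ) : R) * ↑(x ^ m) = 1 := by simp [← Units.val_mul]
  simp only [eval_chebyshevC_add_inv, sub_eq_add_neg k m, zpow_add, Units.val_mul]
  linear_combination
    (↑(x ^ m) + ↑(x ^ (-m)) - ↑(x ^ k) * (↑(x ^ (-m)) * ↑(x ^ m))) * hk - ↑(x ^ k) * hm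

lemma eval_chebyshevC_add_inv_eq_iff :
    (Chebyshev.C R k).eval (x + ↑x⁻¹ : R) = (Chebyshev.C R m).eval (x + ↑x⁻¹ : R) ↔
      (↑(x ^ (k - m)) - 1 : R) * (↑(x ^ (k + m)) - 1) = 0 := by
  rw [← sub_eq_zero, eval_chebyshevC_add_inv_sub, Units.mul_right_eq_zero]

lemma eval_derivative_chebyshevC_add_inv :
    (derivative (Chebyshev.C R k)).eval (x + ↑x⁻¹ : R) * (x - ↑x⁻¹) =
      k * (↑(x ^ k) - ↑(x ^ (-k))) := by
  induction k using Chebyshev.induct' with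
  | zero => simp
  | one => simp
  | add_two n succ_ih ih =>
    rw [Chebyshev.C_add_two]
    simp only [derivative_sub, derivative_mul, derivative_X, eval_sub, eval_add, eval_mul, eval_X,
      one_mul, eval_chebyshevC_add_inv, neg_add, zpow_add, zpow_natCast, zpow_ofNat, zpow_neg,
      ← inv_pow, pow_one, Units.val_mul, Units.val_pow_eq_pow_val, Int.cast_add,
      Int.cast_natCast, Int.cast_one, Int.cast_ofNat] at succ_ih ih ⊢
    linear_combination
      (x + ↑x⁻¹ : R) * succ_ih - ih + (n : R) * ((x : R) ^ n - (↑x⁻¹ : R) ^ n) * x.mul_inv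
  | neg n ih =>
    rw [Chebyshev.C_neg, ih]
    push_cast
    ring_nf

lemma sq_sub_one_sq : ((x : R) ^ 2 - 1) ^ 2 = ((x + ↑x⁻¹ : R) ^ 2 - 4) * x ^ 2 := by
  linear_combination (-(x : R) ^ 2 * 2 - 1 - x * ↑x⁻¹) * x.mul_inv

end ChebyshevEvaluation

section Divisibility

variable {R : Type*} [CommRing R]

lemma zpow_sub_one_dvd_zpow_sub_one (x : Rˣ) {a b : ℤ} (h : a ∣ b) :
    (↑(x ^ a) - 1 : R) ∣ ↑(x ^ b) - 1 := by
  have dvd_pow (n : ℕ) : (↑(x ^ a) - 1 : R) ∣ ↑((x ^ a) ^ n) - 1 := by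
    simpa using sub_dvd_pow_sub_pow (↑(x ^ a) : R) 1 n
  obtain ⟨c, rfl⟩ := h
  rw [zpow_mul]
  obtain ⟨n, rfl | rfl⟩ := c.eq_nat_or_neg
  · simpa only [zpow_natCast] using dvd_pow n
  · have inv_sub_one : (↑((x ^ a) ^ (-n : ℤ)) - 1 : R) =
        -↑((x ^ a) ^ (-n : ℤ)) * (↑((x ^ a) ^ n) - 1) := by
      rw [zpow_neg, zpow_natCast]
      linear_combination ((x ^ a) ^ n).inv_mul
    rw [inv_sub_one]
    exact (dvd_pow n).mul_left _

lemma dvd_pow_lcm_sub_one {q x : R} {m n : ℕ} (h : q ∣ (x ^ m - 1) * (x ^ n - 1))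
    (hx : IsUnit (x ^ n - x ^ m)) : q ∣ x ^ m.lcm n - 1 := by
  obtain ⟨c, hc⟩ : x ^ m - 1 ∣ x ^ m.lcm n - 1 := dvd_pow_sub_one_of_dvd (Nat.dvd_lcm_left m n)
  obtain ⟨d, hd⟩ : x ^ n - 1 ∣ x ^ m.lcm n - 1 := dvd_pow_sub_one_of_dvd (Nat.dvd_lcm_right m n)
  have mul_diff : (x ^ m.lcm n - 1) * (x ^ n - x ^ m) =
      (x ^ m - 1) * (x ^ n - 1) * (c - d) := by
    linear_combination (x ^ n - 1) * hc - (x ^ m - 1) * hd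
  rw [← hx.dvd_mul_right, mul_diff]
  exact h.mul_right _

lemma natCast_mul_sub_one_dvd_pow_sub_one {p : ℕ} (hp : p.Prime) (hp2 : p ≠ 2) {w : R}
    (hw : (p : R) ∣ (w - 1) ^ 2) (j : ℕ) : (p : R) ^ j * (w - 1) ∣ w ^ p ^ j - 1 := by
  induction j with
  | zero => simp
  | succ j ih =>
    set v := w ^ p ^ j - 1 with hv
    have p_dvd_pow : (p : R) ∣ v ^ (p - 1) :=
      hw.trans <| (pow_dvd_pow_of_dvd (dvd_of_mul_left_dvd ih) 2).trans <|
        pow_dvd_pow v (by have := hp.two_le; omega)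
    have p_mul_dvd : (p : R) * v ∣ (v + 1) ^ p - 1 := by
      obtain ⟨r, hr⟩ := exists_add_pow_prime_eq hp v 1
      have p_mul_dvd_pow : (p : R) * v ∣ v ^ p := by
        rw [← pow_sub_one_mul hp.ne_zero v]
        exact mul_dvd_mul_right p_dvd_pow v
      rw [hr, one_pow, mul_one, add_right_comm, add_sub_cancel_right]
      exact dvd_add p_mul_dvd_pow (dvd_mul_right _ _)
    have w_pow : w ^ p ^ (j + 1) = (v + 1) ^ p := by rw [hv, sub_add_cancel, pow_succ, pow_mul]
    rw [w_pow, pow_succ', mul_assoc]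
    exact (mul_dvd_mul_left _ ih).trans p_mul_dvd

lemma pow_pow_eq_one_of_natCast_dvd_sub_one {n e : ℕ} (hn : (n : R) ^ (e + 1) = 0) {x : Rˣ}
    (hx : (n : R) ∣ x - 1) : x ^ n ^ e = 1 := by
  have pow_dvd := dvd_sub_pow_of_dvd_sub hx e
  rw [hn, zero_dvd_iff, one_pow, sub_eq_zero, ← Units.val_pow_eq_pow_val] at pow_dvd
  exact Units.ext pow_dvd

lemma dvd_eval_derivative_of_sq_dvd_eval [IsDomain R] {n : R} (hn : n ≠ 0) {f : R[X]}
    (hf : ∀ a, n ^ 2 ∣ f.eval a) (a : R) : n ∣ (derivative f).eval a := by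
  obtain ⟨c, hc⟩ := f.binomExpansion a n
  have sq_dvd : n ^ 2 ∣ (derivative f).eval a * n := by
    rw [show (derivative f).eval a * n = f.eval (a + n) - f.eval a - c * n ^ 2 by rw [hc]; ring]
    exact dvd_sub (dvd_sub (hf _) (hf _)) (dvd_mul_left _ _)
  rwa [sq, mul_dvd_mul_iff_right hn] at sq_dvd

end Divisibility

section SubOneAddOne

variable {n : ℕ}

lemma two_dvd_lcm_sub_one_add_one (hn : Odd n) : 2 ∣ (n - 1).lcm (n + 1) :=
  (Nat.Odd.sub_odd hn odd_one).two_dvd.trans (Nat.dvd_lcm_left _ _)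

lemma coprime_lcm_sub_one_add_one (hn : 0 < n) : n.Coprime ((n - 1).lcm (n + 1)) := by
  refine Nat.Coprime.of_dvd_right (Nat.lcm_dvd_mul _ _) (Nat.Coprime.mul_right ?_ (by simp))
  exact (Nat.coprime_self_sub_right hn).2 (Nat.coprime_one_right n)

lemma two_mul_lcm_sub_one_add_one (hn : Odd n) :
    2 * (n - 1).lcm (n + 1) = (n - 1) * (n + 1) := by
  have gcd_eq_two : (n - 1).gcd (n + 1) = 2 := by
    obtain ⟨b, rfl⟩ := hn
    simp [show 2 * b + 1 + 1 = 2 * b + 2 from rfl]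
  rw [← Nat.gcd_mul_lcm (n - 1) (n + 1), gcd_eq_two]

lemma sq_sub_one_div_two_eq_lcm (hn : Odd n) : (n ^ 2 - 1) / 2 = (n - 1).lcm (n + 1) := by
  have sq_sub_one : n ^ 2 - 1 = (n + 1) * (n - 1) := by simpa using Nat.sq_sub_sq n 1
  rw [sq_sub_one, mul_comm, ← two_mul_lcm_sub_one_add_one hn, Nat.mul_div_cancel_left _ two_pos]

lemma add_one_lt_lcm_sub_one_add_one (hn : Odd n) (hn3 : 3 < n) :
    n + 1 < (n - 1).lcm (n + 1) := by
  have two_mul_lcm := two_mul_lcm_sub_one_add_one hn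
  have : 3 * (n + 1) ≤ (n - 1) * (n + 1) := Nat.mul_le_mul_right _ (by omega)
  omega

lemma intCast_zmod_lcm_eq_of_dvd_sub {m : ℕ} {a b : ℤ} (hm : (m : ℤ) ∣ a - b)
    (hn : (n : ℤ) ∣ a - b) : (a : ZMod (m.lcm n)) = b := by
  rw [← sub_eq_zero, ← Int.cast_sub, ZMod.intCast_zmod_eq_zero_iff_dvd]
  exact Int.coe_lcm_dvd hm hn

lemma intCast_zmod_pow_mul_lcm_eq_of_dvd_sub (hn : 0 < n) {e : ℕ} {a b : ℤ}
    (h_sub : ((n ^ e * (n - 1) : ℕ) : ℤ) ∣ a - b) (h_add : ((n + 1 : ℕ) : ℤ) ∣ a - b) :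
    (a : ZMod (n ^ e * (n - 1).lcm (n + 1))) = b := by
  rw [← sub_eq_zero, ← Int.cast_sub, ZMod.intCast_zmod_eq_zero_iff_dvd]
  rw [Int.natCast_dvd] at h_sub h_add ⊢
  exact ((coprime_lcm_sub_one_add_one hn).pow_left e).mul_dvd_of_dvd_of_dvd
    (dvd_of_mul_right_dvd h_sub) (Nat.lcm_dvd (dvd_of_mul_left_dvd h_sub) h_add)

end SubOneAddOne

section DicksonFunctions

variable (S : Type*) [CommRing S]

/-- The Dickson polynomial functions `u ↦ D_k(u, 1)` on `S` as a multiplicative family. Using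
Mathlib's rescaled Chebyshev polynomials `C`, the index ranges over all integers, with
`D_{-k} = D_k`. -/
noncomputable def dicksonEnd : ℤ →* Function.End S where
  toFun k u := (Chebyshev.C S k).eval u
  map_one' := by
    funext u
    rw [Chebyshev.C_one, eval_X]
    rfl
  map_mul' k m := by
    funext u
    rw [Chebyshev.C_mul, eval_comp]
    rfl

variable {S}

lemma dicksonEnd_apply (k : ℤ) (u : S) : dicksonEnd S k u = (Chebyshev.C S k).eval u := rfl

lemma dicksonEnd_natCast_apply (k : ℕ) (u : S) :
    dicksonEnd S k u = (dickson 1 1 k).eval u := by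
  rw [dicksonEnd_apply, dickson_one_one_eq_chebyshev_C]

lemma dicksonEnd_neg (k : ℤ) : dicksonEnd S (-k) = dicksonEnd S k := by
  funext u
  rw [dicksonEnd_apply, Chebyshev.C_neg, dicksonEnd_apply]

/-- The set of functions `u ↦ D_k(u, 1)` on `S` with `k` positive and prime to `l`. -/
def dicksonFunctions (S : Type*) [CommRing S] (l : ℕ) : Set (S → S) :=
  {f | ∃ k : ℕ, 0 < k ∧ k.gcd l = 1 ∧ ∀ u, f u = (dickson 1 1 k).eval u}

lemma dicksonEnd_eq_one_iff (k : ℤ) :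
    dicksonEnd S k = 1 ↔ ∀ u : S, (Chebyshev.C S k).eval u = u :=
  funext_iff

lemma dicksonEnd_zmod_eq_one_iff (n : ℕ) (k : ℤ) :
    dicksonEnd (ZMod n) k = 1 ↔ ∀ a : ℤ, (n : ℤ) ∣ (Chebyshev.C ℤ k - X).eval a := by
  rw [dicksonEnd_eq_one_iff, ZMod.intCast_surjective.forall]
  refine forall_congr' fun a => ?_
  have eval_cast := Chebyshev.algebraMap_eval_C (R := ℤ) (R' := ZMod n) a k
  rw [eq_intCast, eq_intCast] at eval_cast
  rw [← eval_cast, eval_sub, eval_X, ← ZMod.intCast_zmod_eq_zero_iff_dvd, Int.cast_sub,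
    sub_eq_zero]

variable {l : ℕ} (hl : Function.Periodic (dicksonEnd S) l)
include hl

lemma dicksonEnd_eq_of_intCast_eq {k m : ℤ} (hkm : (k : ZMod l) = m) :
    dicksonEnd S k = dicksonEnd S m := by
  obtain ⟨c, hc⟩ := (ZMod.intCast_eq_intCast_iff_dvd_sub k m l).1 hkm
  rw [show k = m - c * l by linear_combination -hc]
  exact hl.sub_int_mul_eq c

/-- The Dickson functions with index prime to a period `l` of `dicksonEnd S`, as a homomorphism
on the units modulo `l`; the index of a residue class is its canonical integer representative. -/
noncomputable def dicksonUnitsHom : (ZMod l)ˣ →* (Function.End S)ˣ :=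
  Units.map
    { toFun := fun a => dicksonEnd S a.cast
      map_one' := by
        rw [← map_one (dicksonEnd S)]
        exact dicksonEnd_eq_of_intCast_eq hl (by simp)
      map_mul' := fun a b => by
        rw [← map_mul]
        exact dicksonEnd_eq_of_intCast_eq hl (by simp) }

lemma val_dicksonUnitsHom {a : (ZMod l)ˣ} {k : ℤ} (hk : (k : ZMod l) = a) :
    (dicksonUnitsHom hl a : Function.End S) = dicksonEnd S k :=
  dicksonEnd_eq_of_intCast_eq hl (by simp [hk])

lemma mem_ker_dicksonUnitsHom {a : (ZMod l)ˣ} :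
    a ∈ (dicksonUnitsHom hl).ker ↔ dicksonEnd S (a : ZMod l).cast = 1 := by
  rw [MonoidHom.mem_ker, Units.ext_iff]
  rfl

lemma image_range_dicksonUnitsHom [NeZero l] :
    Units.val '' ((dicksonUnitsHom hl).range : Set (Function.End S)ˣ) = dicksonFunctions S l := by
  ext f
  constructor
  · rintro ⟨_, ⟨a, rfl⟩, rfl⟩
    refine ⟨(a : ZMod l).val + l, Nat.add_pos_right _ (NeZero.pos l), ?_, fun u => ?_⟩
    · rw [Nat.gcd_add_self_left]
      exact ZMod.val_coe_unit_coprime a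
    · rw [← dicksonEnd_natCast_apply,
        val_dicksonUnitsHom hl (k := ((a : ZMod l).val + l : ℕ)) (by simp)]
  · rintro ⟨k, -, hkl, hf⟩
    refine ⟨_, ⟨ZMod.unitOfCoprime k hkl, rfl⟩, ?_⟩
    rw [val_dicksonUnitsHom hl (k := k) (by simp)]
    funext u
    rw [hf, dicksonEnd_natCast_apply]

theorem card_ker_dicksonUnitsHom_mul_card_dicksonFunctions [NeZero l] :
    Nat.card (dicksonUnitsHom hl).ker * Nat.card (dicksonFunctions S l) = l.totient := by
  have card_eq_card_range :
      Nat.card (dicksonFunctions S l) = Nat.card (dicksonUnitsHom hl).range := by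
    rw [← image_range_dicksonUnitsHom hl]
    exact Nat.card_image_of_injective
      (f := (Units.val : (Function.End S)ˣ → Function.End S)) Units.val_injective _
  rw [card_eq_card_range, ← Subgroup.index_ker, Subgroup.card_mul_index,
    Nat.card_eq_fintype_card, ZMod.card_units_eq_totient]

end DicksonFunctions

section Periodicity

/-- `QuadraticAlgebra S (-1) u` is `S[X] / (X ^ 2 - u * X + 1)`. -/
lemma exists_unit_add_inv_eq_algebraMap {S : Type*} [CommRing S] (u : S) :
    ∃ x : (QuadraticAlgebra S (-1) u)ˣ,
      algebraMap S (QuadraticAlgebra S (-1) u) u = x + ↑x⁻¹ := by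
  refine ⟨⟨⟨0, 1⟩, ⟨u, -1⟩, ?_, ?_⟩, ?_⟩ <;> ext <;>
    simp [QuadraticAlgebra.re_one, QuadraticAlgebra.im_one]

variable {p : ℕ} (hp : p.Prime)
include hp

lemma isUnit_or_natCast_dvd {n : ℕ} (z : ZMod (p ^ n)) : IsUnit z ∨ (p : ZMod (p ^ n)) ∣ z := by
  have : NeZero (p ^ n) := ⟨(pow_pos hp.pos n).ne'⟩
  rw [or_iff_not_imp_right]
  intro h_dvd
  have val_not_dvd : ¬ p ∣ z.val := fun h =>
    h_dvd <| by simpa only [ZMod.natCast_zmod_val] using Nat.cast_dvd_cast (α := ZMod (p ^ n)) h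
  rw [← ZMod.natCast_zmod_val z, ZMod.isUnit_iff_coprime]
  exact ((hp.coprime_iff_not_dvd.2 val_not_dvd).symm).pow_right n

lemma natCast_dvd_pow_sub_self {n : ℕ} (u : ZMod n) : (p : ZMod n) ∣ u ^ p - u := by
  have : Fact p.Prime := ⟨hp⟩
  obtain ⟨a, rfl⟩ := ZMod.intCast_surjective u
  have int_dvd : (p : ℤ) ∣ a ^ p - a := by
    simp [← ZMod.intCast_zmod_eq_zero_iff_dvd]
  simpa using map_dvd (Int.castRingHom (ZMod n)) int_dvd

variable {R : Type*} [CommRing R]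

/-- With `u = x + x⁻¹`, the product is a unit multiple of `D_p(u) - u`, and `D_p(u) ≡ u ^ p`
modulo `p`. -/
lemma natCast_dvd_pow_sub_one_mul_pow_add_one_sub_one {x : Rˣ}
    (hx : (p : R) ∣ (x + ↑x⁻¹) ^ p - (x + ↑x⁻¹)) :
    (p : R) ∣ ((x : R) ^ (p - 1) - 1) * ((x : R) ^ (p + 1) - 1) := by
  obtain ⟨r, hr⟩ := exists_add_pow_prime_eq hp (x : R) ↑x⁻¹
  have dvd_eval_sub : (p : R) ∣
      (Chebyshev.C R p).eval (x + ↑x⁻¹ : R) - (Chebyshev.C R 1).eval (x + ↑x⁻¹ : R) := by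
    have eval_p : (Chebyshev.C R p).eval (x + ↑x⁻¹ : R) = (x + ↑x⁻¹) ^ p - p * (x * ↑x⁻¹ * r) := by
      rw [eval_chebyshevC_add_inv, hr]
      simp [← inv_pow]
    rw [eval_p, Chebyshev.C_one, eval_X, sub_right_comm]
    exact dvd_sub hx (dvd_mul_right _ _)
  rw [eval_chebyshevC_add_inv_sub, Units.dvd_mul_left] at dvd_eval_sub
  have sub_one_cast : ((p : ℤ) - 1) = (p - 1 : ℕ) := by rw [Nat.cast_pred hp.pos]
  rw [sub_one_cast] at dvd_eval_sub
  exact_mod_cast dvd_eval_sub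

lemma pow_mul_lcm_eq_one {e : ℕ} (he : (p : R) ^ (e + 1) = 0) {x : Rˣ}
    (hx : (p : R) ∣ (x + ↑x⁻¹) ^ p - (x + ↑x⁻¹)) (hx_unit : IsUnit ((x : R) ^ 2 - 1)) :
    x ^ (p ^ e * (p - 1).lcm (p + 1)) = 1 := by
  have pow_sub_pow :
      (x : R) ^ (p + 1) - (x : R) ^ (p - 1) = ↑(x ^ (p - 1)) * ((x : R) ^ 2 - 1) := by
    rw [show p + 1 = (p - 1) + 2 by have := hp.pos; omega, pow_add, Units.val_pow_eq_pow_val]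
    ring
  have dvd_pow_lcm : (p : R) ∣ (x : R) ^ (p - 1).lcm (p + 1) - 1 :=
    dvd_pow_lcm_sub_one (natCast_dvd_pow_sub_one_mul_pow_add_one_sub_one hp hx) <| by
      rw [pow_sub_pow]
      exact (Units.isUnit _).mul hx_unit
  rw [mul_comm, pow_mul]
  exact pow_pow_eq_one_of_natCast_dvd_sub_one he (by rwa [Units.val_pow_eq_pow_val])

lemma pow_sub_one_mul_sq_sub_one_eq_zero (hp2 : p ≠ 2) {e : ℕ} (he : (p : R) ^ (e + 1) = 0) {x : R}
    (hx : (p : R) ∣ (x ^ 2 - 1) ^ 2) : (x ^ (2 * p ^ e) - 1) * (x ^ 2 - 1) = 0 := by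
  have h_dvd := mul_dvd_mul_right
    (natCast_mul_sub_one_dvd_pow_sub_one hp hp2 hx e) (x ^ 2 - 1)
  rw [← pow_mul] at h_dvd
  refine zero_dvd_iff.1 (dvd_trans ?_ h_dvd)
  rw [← he, pow_succ, mul_assoc, ← sq]
  exact mul_dvd_mul_left _ hx

theorem periodic_dicksonEnd (hp2 : p ≠ 2) (e : ℕ) :
    Function.Periodic (dicksonEnd (ZMod (p ^ (e + 1)))) (p ^ e * (p - 1).lcm (p + 1) : ℕ) := by
  intro k
  funext u
  obtain ⟨x, hx⟩ := exists_unit_add_inv_eq_algebraMap u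
  let R := QuadraticAlgebra (ZMod (p ^ (e + 1))) (-1) u
  let f := algebraMap (ZMod (p ^ (e + 1))) R
  have he : (p : R) ^ (e + 1) = 0 := by
    rw [← Nat.cast_pow, ← map_natCast f, ZMod.natCast_self, map_zero]
  set L := p ^ e * (p - 1).lcm (p + 1) with hL
  apply QuadraticAlgebra.algebraMap_injective (R := ZMod (p ^ (e + 1))) (a := -1) (b := u)
  rw [dicksonEnd_apply, dicksonEnd_apply, Chebyshev.algebraMap_eval_C, Chebyshev.algebraMap_eval_C,
    hx, eval_chebyshevC_add_inv_eq_iff, add_sub_cancel_left]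
  have sq_eq : ((x : R) ^ 2 - 1) ^ 2 = f (u ^ 2 - 4) * x ^ 2 := by
    rw [sq_sub_one_sq, ← hx, map_sub, map_pow, map_ofNat]
  rcases isUnit_or_natCast_dvd hp (u ^ 2 - 4) with h_unit | h_dvd
  · have x_unit : IsUnit ((x : R) ^ 2 - 1) := by
      rw [← isUnit_pow_iff two_ne_zero, sq_eq]
      exact (h_unit.map f).mul (x.isUnit.pow 2)
    have hu : (p : R) ∣ (x + ↑x⁻¹) ^ p - (x + ↑x⁻¹) := by
      have h_dvd := map_dvd f (natCast_dvd_pow_sub_self hp u)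
      rwa [map_natCast, map_sub, map_pow, show f u = _ from hx] at h_dvd
    rw [zpow_natCast, pow_mul_lcm_eq_one hp he hu x_unit, Units.val_one, sub_self, zero_mul]
  · have hx_dvd : (p : R) ∣ ((x : R) ^ 2 - 1) ^ 2 := by
      rw [sq_eq]
      exact (by simpa using map_dvd f h_dvd : (p : R) ∣ f (u ^ 2 - 4)).mul_right _
    have h_zero := pow_sub_one_mul_sq_sub_one_eq_zero hp hp2 he hx_dvd
    have two_dvd_lcm := two_dvd_lcm_sub_one_add_one (hp.odd_of_ne_two hp2)
    have hL_dvd : ((2 * p ^ e : ℕ) : ℤ) ∣ L := by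
      rw [hL, mul_comm]
      exact_mod_cast mul_dvd_mul_left _ two_dvd_lcm
    have hkL_dvd : (2 : ℤ) ∣ k + L + k := by
      have : (2 : ℤ) ∣ L := by exact_mod_cast two_dvd_lcm.mul_left _
      omega
    refine zero_dvd_iff.1 ?_
    rw [← h_zero]
    exact_mod_cast mul_dvd_mul (zpow_sub_one_dvd_zpow_sub_one x hL_dvd)
      (zpow_sub_one_dvd_zpow_sub_one x hkL_dvd)

end Periodicity

section FixedIndices

lemma zpow_sub_one_mul_zpow_add_one_eq_zero {S K : Type*} [CommRing S] [CommRing K] [Algebra S K]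
    {k : ℤ} (h : dicksonEnd S k = 1) {x : Kˣ} {u : S} (hx : algebraMap S K u = x + ↑x⁻¹) :
    (↑(x ^ (k - 1)) - 1 : K) * (↑(x ^ (k + 1)) - 1) = 0 := by
  rw [← eval_chebyshevC_add_inv_eq_iff, ← hx, ← Chebyshev.algebraMap_eval_C,
    ← Chebyshev.algebraMap_eval_C, (dicksonEnd_eq_one_iff k).1 h, Chebyshev.C_one, eval_X]

lemma algebraMap_eval_derivative_chebyshevC {S K : Type*} [CommRing S] [CommRing K] [Algebra S K]
    (k : ℤ) (u : S) :
    algebraMap S K ((derivative (Chebyshev.C S k)).eval u) =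
      (derivative (Chebyshev.C K k)).eval (algebraMap S K u) := by
  rw [← Chebyshev.map_C (algebraMap S K), derivative_map, eval_map_algebraMap,
    aeval_algebraMap_apply_eq_algebraMap_eval]

lemma intCast_eq_one_of_zpow_eq_self {K : Type*} [CommRing K] [IsDomain K] {x : Kˣ} {k : ℤ}
    (hx : x ^ 2 ≠ 1) (hk : x ^ k = x)
    (h_der : (derivative (Chebyshev.C K k)).eval (x + ↑x⁻¹ : K) = 1) : (k : K) = 1 := by
  have sub_inv_ne_zero : (x - ↑x⁻¹ : K) ≠ 0 := by
    rwa [sub_ne_zero, ne_eq, ← Units.ext_iff, eq_inv_iff_mul_eq_one, ← sq]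
  have eval_der := eval_derivative_chebyshevC_add_inv x k
  rw [h_der, zpow_neg, hk] at eval_der
  exact (mul_right_cancel₀ sub_inv_ne_zero eval_der).symm

lemma dicksonEnd_zmod_eq_one_of_dvd {m n : ℕ} (hmn : m ∣ n) {k : ℤ}
    (h : dicksonEnd (ZMod n) k = 1) : dicksonEnd (ZMod m) k = 1 := by
  rw [dicksonEnd_zmod_eq_one_iff] at h ⊢
  exact fun a => (Int.natCast_dvd_natCast.2 hmn).trans (h a)

lemma eval_derivative_chebyshevC_eq_one {m n : ℕ} (hm : m ≠ 0) (hmn : m ^ 2 ∣ n) {k : ℤ}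
    (h : dicksonEnd (ZMod n) k = 1) (u : ZMod m) :
    (derivative (Chebyshev.C (ZMod m) k)).eval u = 1 := by
  obtain ⟨a, rfl⟩ := ZMod.intCast_surjective u
  have sq_dvd : ∀ a : ℤ, (m : ℤ) ^ 2 ∣ (Chebyshev.C ℤ k - X).eval a := by
    exact_mod_cast (dicksonEnd_zmod_eq_one_iff _ k).1 (dicksonEnd_zmod_eq_one_of_dvd hmn h)
  have h_dvd := dvd_eval_derivative_of_sq_dvd_eval (Nat.cast_ne_zero.2 hm) sq_dvd a
  rw [derivative_sub, derivative_X, eval_sub, eval_one, ← ZMod.intCast_zmod_eq_zero_iff_dvd,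
    Int.cast_sub, Int.cast_one, sub_eq_zero] at h_dvd
  rw [← h_dvd, ← eq_intCast (algebraMap ℤ (ZMod m)), ← eq_intCast (algebraMap ℤ (ZMod m)),
    algebraMap_eval_derivative_chebyshevC]

lemma exists_orderOf_eq_add_one (p : ℕ) [Fact p.Prime] :
    ∃ (x : (GaloisField p 2)ˣ) (u : ZMod p),
      orderOf x = p + 1 ∧ algebraMap (ZMod p) (GaloisField p 2) u = x + ↑x⁻¹ := by
  have sub_one_pos := Nat.sub_pos_of_lt (Fact.out : p.Prime).one_lt
  obtain ⟨g, hg⟩ :=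
    (inferInstance : IsCyclic (GaloisField p 2)ˣ).exists_ofOrder_eq_natCard
  have order_g : orderOf g = (p - 1) * (p + 1) := by
    rw [hg, Nat.card_units, GaloisField.card p 2 two_ne_zero, mul_comm, ← Nat.sq_sub_sq, one_pow]
  have order_x : orderOf (g ^ (p - 1)) = p + 1 := by
    rw [orderOf_pow_of_dvd sub_one_pos.ne' (order_g ▸ dvd_mul_right _ _), order_g,
      Nat.mul_div_cancel_left _ sub_one_pos]
  generalize g ^ (p - 1) = x at order_x
  have frobenius_x : x ^ p = x⁻¹ := by
    rw [eq_inv_iff_mul_eq_one, ← pow_succ, ← order_x, pow_orderOf_eq_one]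
  have mem_bot : (x + ↑x⁻¹ : GaloisField p 2) ∈ (⊥ : Subfield (GaloisField p 2)) := by
    rw [Subfield.mem_bot_iff_pow_eq_self _ p, add_pow_char, ← Units.val_pow_eq_pow_val,
      ← Units.val_pow_eq_pow_val, inv_pow, frobenius_x, inv_inv, add_comm]
  obtain ⟨a, ha⟩ := (mem_bot_iff_intCast p _).1 mem_bot
  exact ⟨x, a, order_x, by rw [map_intCast, ha]⟩

variable {p : ℕ} (hp : p.Prime)
include hp

lemma exists_orderOf_eq_prime_pow_mul_sub_one (hp2 : p ≠ 2) (e : ℕ) :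
    ∃ g : (ZMod (p ^ (e + 1)))ˣ, orderOf g = p ^ e * (p - 1) := by
  have : NeZero (p ^ (e + 1)) := ⟨(pow_pos hp.pos _).ne'⟩
  obtain ⟨g, hg⟩ := (ZMod.isCyclic_units_of_prime_pow p hp hp2 (e + 1)).exists_ofOrder_eq_natCard
  refine ⟨g, ?_⟩
  rw [hg, Nat.card_eq_fintype_card, ZMod.card_units_eq_totient, Nat.totient_prime_pow_succ hp]

lemma prime_pow_mul_sub_one_dvd_of_dicksonEnd_eq_one (hp3 : 3 < p) {e : ℕ} {k : ℤ}
    (h : dicksonEnd (ZMod (p ^ (e + 1))) k = 1) :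
    ((p ^ e * (p - 1) : ℕ) : ℤ) ∣ k - 1 ∨ ((p ^ e * (p - 1) : ℕ) : ℤ) ∣ k + 1 := by
  obtain ⟨g, hg⟩ := exists_orderOf_eq_prime_pow_mul_sub_one hp (by omega) e
  have h_mul := zpow_sub_one_mul_zpow_add_one_eq_zero h (x := g) (K := ZMod (p ^ (e + 1))) rfl
  simp only [← hg, orderOf_dvd_iff_zpow_eq_one, Units.ext_iff, Units.val_one]
  rcases isUnit_or_natCast_dvd hp (↑(g ^ (k - 1)) - 1 : ZMod (p ^ (e + 1))) with h_unit | sub_dvd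
  · exact .inr (sub_eq_zero.1 (h_unit.mul_right_eq_zero.1 h_mul))
  rcases isUnit_or_natCast_dvd hp (↑(g ^ (k + 1)) - 1 : ZMod (p ^ (e + 1))) with h_unit | add_dvd
  · exact .inl (sub_eq_zero.1 (h_unit.mul_left_eq_zero.1 h_mul))
  exfalso
  have dvd_sq : (p : ZMod (p ^ (e + 1))) ∣ ↑(g ^ 2) - 1 := by
    have h_dvd := dvd_sub add_dvd sub_dvd
    have zpow_sub_zpow : (↑(g ^ (k + 1)) - 1 - (↑(g ^ (k - 1)) - 1) : ZMod (p ^ (e + 1))) =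
        ↑(g ^ (k - 1)) * (↑(g ^ 2) - 1) := by
      rw [show k + 1 = k - 1 + 2 by ring, zpow_add, Units.val_mul, zpow_ofNat]
      ring
    rwa [zpow_sub_zpow, Units.dvd_mul_left] at h_dvd
  have pow_eq_one : (g ^ 2) ^ p ^ e = 1 :=
    pow_pow_eq_one_of_natCast_dvd_sub_one (by rw [← Nat.cast_pow, ZMod.natCast_self]) dvd_sq
  rw [← pow_mul, ← orderOf_dvd_iff_pow_eq_one, hg, mul_comm 2,
    Nat.mul_dvd_mul_iff_left (pow_pos hp.pos e)] at pow_eq_one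
  have := Nat.le_of_dvd two_pos pow_eq_one
  omega

lemma add_one_dvd_of_dicksonEnd_eq_one {k : ℤ} (h : dicksonEnd (ZMod p) k = 1) :
    ((p + 1 : ℕ) : ℤ) ∣ k - 1 ∨ ((p + 1 : ℕ) : ℤ) ∣ k + 1 := by
  have : Fact p.Prime := ⟨hp⟩
  obtain ⟨x, u, order_x, hx⟩ := exists_orderOf_eq_add_one p
  simpa only [← order_x, orderOf_dvd_iff_zpow_eq_one, Units.ext_iff, Units.val_one, mul_eq_zero,
    sub_eq_zero] using zpow_sub_one_mul_zpow_add_one_eq_zero h hx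

/-- Modulo `p ^ 2` the derivative of `D_k` is forced to be `1`, which ties the sign of `k` modulo
`p` to its sign modulo `p + 1`. -/
lemma prime_mul_add_one_dvd_of_dicksonEnd_eq_one {e : ℕ} (he : e ≠ 0) {k : ℤ}
    (h : dicksonEnd (ZMod (p ^ (e + 1))) k = 1) :
    ((p : ℤ) ∣ k - 1 ∧ ((p + 1 : ℕ) : ℤ) ∣ k - 1) ∨
      ((p : ℤ) ∣ k + 1 ∧ ((p + 1 : ℕ) : ℤ) ∣ k + 1) := by
  have : Fact p.Prime := ⟨hp⟩
  obtain ⟨x, u, order_x, hx⟩ := exists_orderOf_eq_add_one p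
  have x_sq : x ^ 2 ≠ 1 := fun h_one => by
    have := Nat.le_of_dvd two_pos (order_x ▸ orderOf_dvd_of_pow_eq_one h_one)
    have := hp.two_le
    omega
  have prime_dvd_sub_one {m : ℤ} (h : dicksonEnd (ZMod (p ^ (e + 1))) m = 1)
      (hm : ((p + 1 : ℕ) : ℤ) ∣ m - 1) : (p : ℤ) ∣ m - 1 := by
    rw [← order_x, orderOf_dvd_iff_zpow_eq_one, zpow_sub_one, mul_inv_eq_one] at hm
    have h_der := eval_derivative_chebyshevC_eq_one hp.ne_zero (pow_dvd_pow p (by omega)) h u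
    have h_der_K := congrArg (algebraMap (ZMod p) (GaloisField p 2)) h_der
    rw [algebraMap_eval_derivative_chebyshevC, hx, map_one] at h_der_K
    rw [← CharP.intCast_eq_zero_iff (GaloisField p 2), Int.cast_sub, Int.cast_one, sub_eq_zero]
    exact intCast_eq_one_of_zpow_eq_self x_sq hm h_der_K
  have h_prime := dicksonEnd_zmod_eq_one_of_dvd (dvd_pow_self p e.succ_ne_zero) h
  refine (add_one_dvd_of_dicksonEnd_eq_one hp h_prime).imp
    (fun h_sub => ⟨prime_dvd_sub_one h h_sub, h_sub⟩) fun h_add => ⟨?_, h_add⟩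
  have h_neg := prime_dvd_sub_one (by rwa [dicksonEnd_neg])
    (show ((p + 1 : ℕ) : ℤ) ∣ -k - 1 by rwa [← neg_add', dvd_neg])
  rwa [← neg_add', dvd_neg] at h_neg

lemma dicksonEnd_zmod_prime : dicksonEnd (ZMod p) p = 1 := by
  have : Fact p.Prime := ⟨hp⟩
  funext u
  rw [dicksonEnd_natCast_apply, dickson_one_one_zmod_p, eval_pow, eval_X, ZMod.pow_card]
  rfl

lemma periodic_dicksonEnd_prime (hp2 : p ≠ 2) :
    Function.Periodic (dicksonEnd (ZMod p)) ((p - 1).lcm (p + 1) : ℕ) := by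
  have h := periodic_dicksonEnd hp hp2 0
  rwa [zero_add, pow_one, pow_zero, one_mul] at h

theorem dicksonEnd_zmod_prime_eq_one_iff (hp3 : 3 < p) (k : ℤ) :
    dicksonEnd (ZMod p) k = 1 ↔
      (k : ZMod ((p - 1).lcm (p + 1))) = 1 ∨ (k : ZMod ((p - 1).lcm (p + 1))) = -1 ∨
        (k : ZMod ((p - 1).lcm (p + 1))) = p ∨ (k : ZMod ((p - 1).lcm (p + 1))) = -p := by
  have h_periodic := periodic_dicksonEnd_prime hp (by omega)
  constructor
  · intro h
    have h_split := prime_pow_mul_sub_one_dvd_of_dicksonEnd_eq_one hp hp3 (e := 0) (k := k)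
      (by rwa [zero_add, pow_one])
    rw [pow_zero, one_mul] at h_split
    have dvd_p_sub_one : ((p - 1 : ℕ) : ℤ) ∣ p - 1 := by rw [Nat.cast_pred hp.pos]
    have dvd_p_add_one : ((p + 1 : ℕ) : ℤ) ∣ p + 1 := by rw [Nat.cast_succ]
    rcases h_split with h_sub | h_sub <;>
      rcases add_one_dvd_of_dicksonEnd_eq_one hp h with h_add | h_add
    · left
      exact_mod_cast intCast_zmod_lcm_eq_of_dvd_sub (b := 1) h_sub h_add
    · right; right; left
      exact_mod_cast intCast_zmod_lcm_eq_of_dvd_sub (b := p)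
        (by simpa using dvd_sub h_sub dvd_p_sub_one) (by simpa using dvd_sub h_add dvd_p_add_one)
    · right; right; right
      have h_eq := intCast_zmod_lcm_eq_of_dvd_sub (b := -p)
        (by simpa using dvd_add h_sub dvd_p_sub_one) (by simpa using! dvd_add h_add dvd_p_add_one)
      rwa [Int.cast_neg, Int.cast_natCast] at h_eq
    · right; left
      exact_mod_cast intCast_zmod_lcm_eq_of_dvd_sub (b := -1)
        (by simpa using h_sub) (by simpa using h_add)
  · rintro (h | h | h | h)
    · rw [dicksonEnd_eq_of_intCast_eq h_periodic (m := 1) (by simpa), map_one]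
    · rw [dicksonEnd_eq_of_intCast_eq h_periodic (m := -1) (by simpa), dicksonEnd_neg, map_one]
    · rw [dicksonEnd_eq_of_intCast_eq h_periodic (m := p) (by simpa), dicksonEnd_zmod_prime hp]
    · rw [dicksonEnd_eq_of_intCast_eq h_periodic (m := -p) (by simpa), dicksonEnd_neg,
        dicksonEnd_zmod_prime hp]

theorem dicksonEnd_zmod_prime_pow_eq_one_iff (hp3 : 3 < p) {e : ℕ} (he : e ≠ 0) (k : ℤ) :
    dicksonEnd (ZMod (p ^ (e + 1))) k = 1 ↔
      (k : ZMod (p ^ e * (p - 1).lcm (p + 1))) = 1 ∨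
        (k : ZMod (p ^ e * (p - 1).lcm (p + 1))) = -1 := by
  have h_periodic := periodic_dicksonEnd hp (by omega) e
  constructor
  · intro h
    have prime_dvd {a : ℤ} (ha : ((p ^ e * (p - 1) : ℕ) : ℤ) ∣ a) : (p : ℤ) ∣ a :=
      (Int.natCast_dvd_natCast.2 ((dvd_pow_self p he).mul_right _)).trans ha
    have sign_unique (h_sub : (p : ℤ) ∣ k - 1) (h_add : (p : ℤ) ∣ k + 1) : False := by
      have h_two : (p : ℤ) ∣ 2 := by
        simpa only [show k + 1 - (k - 1) = 2 by ring] using dvd_sub h_add h_sub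
      have := Int.le_of_dvd two_pos h_two
      omega
    rcases prime_pow_mul_sub_one_dvd_of_dicksonEnd_eq_one hp hp3 h with hk_sub | hk_sub <;>
      rcases prime_mul_add_one_dvd_of_dicksonEnd_eq_one hp he h with ⟨hpk, hk_add⟩ | ⟨hpk, hk_add⟩
    · left
      exact_mod_cast intCast_zmod_pow_mul_lcm_eq_of_dvd_sub hp.pos (b := 1) hk_sub hk_add
    · exact (sign_unique (prime_dvd hk_sub) hpk).elim
    · exact (sign_unique hpk (prime_dvd hk_sub)).elim
    · right
      exact_mod_cast intCast_zmod_pow_mul_lcm_eq_of_dvd_sub hp.pos (b := -1)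
        (by simpa using hk_sub) (by simpa using hk_add)
  · rintro (h | h)
    · rw [dicksonEnd_eq_of_intCast_eq h_periodic (m := 1) (by simpa), map_one]
    · rw [dicksonEnd_eq_of_intCast_eq h_periodic (m := -1) (by simpa), dicksonEnd_neg, map_one]

end FixedIndices

section Counting

lemma neg_one_ne_one_zmod_units {n : ℕ} [Fact (2 < n)] : (-1 : (ZMod n)ˣ) ≠ 1 :=
  fun h => ZMod.neg_one_ne_one (by simpa using congrArg Units.val h)

lemma ncard_one_neg_one_self_neg {R : Type*} [Ring R] {z : Rˣ} (h_neg : (-1 : Rˣ) ≠ 1)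
    (h_one : z ≠ 1) (h_neg_one : z ≠ -1) : ({1, -1, z, -z} : Set Rˣ).ncard = 4 := by
  have z_ne_neg : z ≠ -z := fun h => h_neg <| by
    rw [← mul_right_inj z, mul_neg, mul_one, ← h]
  have neg_z_ne_one : 1 ≠ -z := fun h => h_neg_one (by rw [h, neg_neg])
  rw [Set.ncard_insert_of_notMem, Set.ncard_insert_of_notMem, Set.ncard_pair z_ne_neg]
  · simpa using ⟨h_neg_one.symm, h_one.symm⟩
  · simpa using ⟨h_neg.symm, h_one.symm, neg_z_ne_one⟩

variable {p : ℕ} (hp : p.Prime)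
include hp

lemma totient_prime_pow_mul_lcm (e : ℕ) :
    (p ^ (e + 1) * (p - 1).lcm (p + 1)).totient =
      p ^ e * (p - 1) * ((p - 1).lcm (p + 1)).totient := by
  rw [Nat.totient_mul ((coprime_lcm_sub_one_add_one hp.pos).pow_left _),
    Nat.totient_prime_pow_succ hp]

theorem two_mul_card_dicksonFunctions (hp3 : 3 < p) {e : ℕ} (he : e ≠ 0) :
    2 * Nat.card (dicksonFunctions (ZMod (p ^ (e + 1))) (p ^ e * (p - 1).lcm (p + 1))) =
      (p ^ e * (p - 1).lcm (p + 1)).totient := by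
  have h_periodic := periodic_dicksonEnd hp (by omega) e
  have lt_lcm := add_one_lt_lcm_sub_one_add_one (hp.odd_of_ne_two (by omega)) hp3
  have two_lt : 2 < p ^ e * (p - 1).lcm (p + 1) :=
    (by omega : 2 < (p - 1).lcm (p + 1)).trans_le (Nat.le_mul_of_pos_left _ (pow_pos hp.pos e))
  have : Fact (2 < p ^ e * (p - 1).lcm (p + 1)) := ⟨two_lt⟩
  have : NeZero (p ^ e * (p - 1).lcm (p + 1)) := ⟨by omega⟩
  have ker_eq : ((dicksonUnitsHom h_periodic).ker : Set (ZMod (p ^ e * (p - 1).lcm (p + 1)))ˣ) =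
      {1, -1} := by
    ext a
    rw [SetLike.mem_coe, mem_ker_dicksonUnitsHom, dicksonEnd_zmod_prime_pow_eq_one_iff hp hp3 he]
    simp only [Units.ext_iff, ZMod.intCast_cast, ZMod.cast_id', id_eq, Set.mem_insert_iff,
      Set.mem_singleton_iff, Units.val_one, Units.val_neg]
  have card_ker : Nat.card (dicksonUnitsHom h_periodic).ker = 2 := by
    rw [← SetLike.coe_sort_coe, Nat.card_coe_set_eq, ker_eq]
    exact Set.ncard_pair neg_one_ne_one_zmod_units.symm
  rw [← card_ker_dicksonUnitsHom_mul_card_dicksonFunctions h_periodic, card_ker]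

theorem four_mul_card_dicksonFunctions (hp3 : 3 < p) :
    4 * Nat.card (dicksonFunctions (ZMod p) ((p - 1).lcm (p + 1))) =
      ((p - 1).lcm (p + 1)).totient := by
  have h_periodic := periodic_dicksonEnd_prime hp (by omega)
  have lt_lcm := add_one_lt_lcm_sub_one_add_one (hp.odd_of_ne_two (by omega)) hp3
  have : Fact (2 < (p - 1).lcm (p + 1)) := ⟨by omega⟩
  have : NeZero ((p - 1).lcm (p + 1)) := ⟨by omega⟩
  let z := ZMod.unitOfCoprime p (coprime_lcm_sub_one_add_one hp.pos)
  have ker_eq : ((dicksonUnitsHom h_periodic).ker : Set (ZMod ((p - 1).lcm (p + 1)))ˣ) =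
      {1, -1, z, -z} := by
    ext a
    rw [SetLike.mem_coe, mem_ker_dicksonUnitsHom, dicksonEnd_zmod_prime_eq_one_iff hp hp3]
    simp only [Units.ext_iff, ZMod.intCast_cast, ZMod.cast_id', id_eq, Set.mem_insert_iff,
      Set.mem_singleton_iff, Units.val_one, Units.val_neg, z, ZMod.coe_unitOfCoprime]
  have z_ne_one : z ≠ 1 := fun h => by
    have h_cast : ((p : ℕ) : ZMod ((p - 1).lcm (p + 1))) = (1 : ℕ) := by
      simpa [z] using congrArg Units.val h
    rw [ZMod.natCast_eq_natCast_iff', Nat.mod_eq_of_lt (by omega),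
      Nat.mod_eq_of_lt (by omega)] at h_cast
    omega
  have z_ne_neg_one : z ≠ -1 := fun h => by
    have h_cast : ((p + 1 : ℕ) : ZMod ((p - 1).lcm (p + 1))) = 0 := by
      simpa [z, eq_neg_iff_add_eq_zero] using congrArg Units.val h
    have := Nat.le_of_dvd p.succ_pos ((ZMod.natCast_eq_zero_iff _ _).1 h_cast)
    omega
  have card_ker : Nat.card (dicksonUnitsHom h_periodic).ker = 4 := by
    rw [← SetLike.coe_sort_coe, Nat.card_coe_set_eq, ker_eq]
    exact ncard_one_neg_one_self_neg neg_one_ne_one_zmod_units z_ne_one z_ne_neg_one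
  rw [← card_ker_dicksonUnitsHom_mul_card_dicksonFunctions h_periodic, card_ker]

end Counting

theorem card_dickson_permutation_group_odd_prime_pow
    (p : ℕ) (hp : p.Prime) (hp5 : 5 ≤ p) (e : ℕ) (he : 1 ≤ e)
    (l : ℕ) (hl : l = p ^ (e - 1) * ((p ^ 2 - 1) / 2))
    (G : Set (ZMod (p ^ e) → ZMod (p ^ e)))
    (hG : G = {f : ZMod (p ^ e) → ZMod (p ^ e) | ∃ k : ℕ, 0 < k ∧ Nat.gcd k l = 1 ∧
      ∀ u : ZMod (p ^ e), f u = Polynomial.eval u (Polynomial.dickson 1 1 k)}) :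
    (e = 1 → Nat.card G = Nat.totient l / 4 ∧
      Nat.card G = Nat.totient ((p ^ 2 - 1) / 2) / 4) ∧
    (1 < e → Nat.card G = Nat.totient l / 2 ∧
      Nat.card G = p ^ (e - 2) * (p - 1) / 2 * Nat.totient ((p ^ 2 - 1) / 2)) := by
  rw [sq_sub_one_div_two_eq_lcm (hp.odd_of_ne_two (by omega))] at hl ⊢
  replace hG : G = dicksonFunctions (ZMod (p ^ e)) l := hG
  subst hG hl
  refine ⟨?_, fun one_lt => ?_⟩
  · rintro rfl
    have h_card := Nat.eq_div_of_mul_eq_right four_ne_zero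
      (four_mul_card_dicksonFunctions hp (by omega))
    rw [Nat.sub_self, pow_zero, one_mul, pow_one]
    exact ⟨h_card, h_card⟩
  · obtain ⟨n, rfl⟩ : ∃ n, e = n + 2 := ⟨e - 2, by omega⟩
    have h_card := Nat.eq_div_of_mul_eq_right two_ne_zero
      (two_mul_card_dicksonFunctions hp (by omega) n.succ_ne_zero)
    have even_pow_mul : 2 ∣ p ^ n * (p - 1) :=
      ((hp.even_sub_one (by omega)).two_dvd).mul_left _
    rw [Nat.add_sub_cancel, show n + 2 - 1 = n + 1 from rfl,
      Nat.div_mul_right_comm even_pow_mul, ← totient_prime_pow_mul_lcm hp]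
    exact ⟨h_card, h_card⟩
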